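/- Let $n \geq 2$, let $\alpha_1,\dots,\alpha_n$ and $m \geq 3$ be integers with $\alpha_j \geq 3$, let $1 \leq p < \infty$, and let $f$ be a Schwartz function on $\mathbb{R}^n$. Suppose there is a constant $A$ such that $\int_{\mathbb{S}^{n-1}} |T_{\alpha,m}g(x)|^2\, d\sigma(x) \leq A^2 \|g\|_{L^p(\mathbb{R}^n)}^2$ for all Schwartz functions $g$ (and hence, by density and continuity, for all bounded compactly supported measurable $g$). Then there is a constant $A'$ such that for all sufficiently small $\delta \in (0,1/2)$ and all bounded compactly supported measurable $g$, $\int_{\{x \in \mathbb{R}^n:\, 1 - \delta^2 \leq |x| \leq 1 + \delta^2\}} |T_{\alpha,m}g(x)|^2\, dx \leq A'\, \delta^2\, \|g\|_{L^p(\mathbb{R}^n)}^2$. -/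

import Mathlib

open MeasureTheory
open scoped ENNReal

/-- The oscillatory integral operator
`T_{α,m} g (x) = ∫ e^{i (x₁^{α₁} y₁^m + ⋯ + xₙ^{αₙ} yₙ^m)} g(y) dy`. -/
noncomputable def oscOp {n : ℕ} (α : Fin n → ℕ) (m : ℕ)
    (g : EuclideanSpace ℝ (Fin n) → ℂ) (x : EuclideanSpace ℝ (Fin n)) : ℂ :=
  ∫ y : EuclideanSpace ℝ (Fin n),
    Complex.exp (Complex.I * Complex.ofReal (∑ j, (x j) ^ (α j) * (y j) ^ m)) * g y

/-!
Only the integrals of `|T g|²` over spheres of radius `r` near `1` have to be compared with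
`‖g‖_p²`: integrating in polar coordinates over `|r - 1| ≤ δ²` then produces the factor `δ²`.
Since `(r x_j)^{α_j} y_j^m = x_j^{α_j} (r^{α_j/m} y_j)^m`, the function `x ↦ T g (r x)` is `T`
applied to an anisotropic dilate of `g`, up to a Jacobian, so the estimate on the unit sphere gives
the one on the sphere of radius `r` with a constant that is a power of `r` and is bounded for
`r ∈ [1/2, 3/2]`.

The hypothesis is extended from Schwartz functions to `L¹ ∩ L^p`, a class invariant under these
dilations: truncation and mollification approximate `g` almost everywhere by dominated sequences,
along which `T g` converges pointwise, `‖g‖_p` converges, and Fatou's lemma applies on the sphere.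

Polar coordinates carry the measure `Measure.toSphere`, the hypothesis the Hausdorff measure
`μH[n-1]`. The former is at most a constant multiple of the latter, because the cone over a subset
of the sphere of diameter `d` is covered by about `1/d` balls of radius `2d`, of total volume
`O(d^{n-1})`. That `μH[n-1]` is finite on the sphere also matters: otherwise the integral in the
hypothesis could be that of a non-integrable function, which is `0` by convention.
-/

open Filter Metric Module Set Topology
open scoped NNReal Pointwise Convolution

section HausdorffMeasureSphere

variable {E : Type*} [NormedAddCommGroup E] [NormedSpace ℝ E]

theorem lipschitzOnWith_normalize {c : ℝ≥0} (hc : c ≠ 0) :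
    LipschitzOnWith (2 / c) (NormedSpace.normalize : E → E) {x | c ≤ ‖x‖} := by
  refine LipschitzOnWith.of_dist_le_mul fun x hx y hy => ?_
  have c_pos : (0 : ℝ) < c := by positivity
  have hx₀ : 0 < ‖x‖ := c_pos.trans_le hx
  have hy₀ : 0 < ‖y‖ := c_pos.trans_le hy
  have split : NormedSpace.normalize x - NormedSpace.normalize y =
      ‖x‖⁻¹ • (x - y) + ((‖y‖ - ‖x‖) * (‖x‖⁻¹ * ‖y‖⁻¹)) • y := by
    have : (‖y‖ - ‖x‖) * (‖x‖⁻¹ * ‖y‖⁻¹) = ‖x‖⁻¹ - ‖y‖⁻¹ := by field_simp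
    rw [this, NormedSpace.normalize, NormedSpace.normalize]
    module
  rw [dist_eq_norm, dist_eq_norm, split]
  calc ‖‖x‖⁻¹ • (x - y) + ((‖y‖ - ‖x‖) * (‖x‖⁻¹ * ‖y‖⁻¹)) • y‖
      ≤ ‖x‖⁻¹ * ‖x - y‖ + |‖y‖ - ‖x‖| * ‖x‖⁻¹ := by
        refine (norm_add_le _ _).trans_eq ?_
        simp only [norm_smul, norm_mul, norm_inv, Real.norm_eq_abs, abs_norm]
        field_simp
    _ ≤ ‖x‖⁻¹ * ‖x - y‖ + ‖x - y‖ * ‖x‖⁻¹ := by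
        gcongr
        exact (abs_norm_sub_norm_le y x).trans_eq (norm_sub_rev y x)
    _ = 2 / ‖x‖ * ‖x - y‖ := by ring
    _ ≤ (2 / c : ℝ≥0) * ‖x - y‖ := by
        push_cast
        gcongr
        exact hx

theorem isometry_insertNth {k : ℕ} (j : Fin (k + 1)) (a : ℝ) :
    Isometry fun v : Fin k → ℝ => (j.insertNth a v : Fin (k + 1) → ℝ) :=
  Isometry.of_dist_eq fun v w => by simp [Fin.dist_insertNth_insertNth]

theorem sphere_pi_subset_iUnion_insertNth (k : ℕ) :
    sphere (0 : Fin (k + 1) → ℝ) 1 ⊆ ⋃ j : Fin (k + 1), ⋃ s : SignType,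
      (fun v : Fin k → ℝ => (j.insertNth (s : ℝ) v : Fin (k + 1) → ℝ)) '' closedBall 0 1 := by
  intro x hx
  rw [mem_sphere_zero_iff_norm] at hx
  obtain ⟨j, hj⟩ := Finite.exists_max fun j => ‖x j‖
  have norm_xj : ‖x j‖ = 1 := by
    refine le_antisymm (hx ▸ norm_le_pi_norm x j) ?_
    exact hx ▸ (pi_norm_le_iff_of_nonneg (norm_nonneg _)).2 hj
  have sign_xj : (SignType.sign (x j) : ℝ) = x j := by
    simpa [← Real.norm_eq_abs, norm_xj] using sign_mul_abs (x j)
  refine mem_iUnion₂.2 ⟨j, SignType.sign (x j), j.removeNth x, ?_, ?_⟩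
  · rw [mem_closedBall_zero_iff]
    exact hx ▸ (pi_norm_le_iff_of_nonneg (norm_nonneg _)).2 fun i => norm_le_pi_norm x _
  · rw [sign_xj]
    exact j.insertNth_self_removeNth x

theorem hausdorffMeasure_sphere_pi_lt_top (k : ℕ) :
    μH[k] (sphere (0 : Fin (k + 1) → ℝ) 1) < ∞ := by
  refine (measure_mono (sphere_pi_subset_iUnion_insertNth k)).trans_lt ?_
  refine (measure_iUnion_le _).trans_lt ?_
  rw [tsum_fintype]
  refine ENNReal.sum_lt_top.2 fun j _ => (measure_iUnion_le _).trans_lt ?_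
  rw [tsum_fintype]
  refine ENNReal.sum_lt_top.2 fun s _ => ?_
  have hausdorff_eq_volume : (μH[k] : Measure (Fin k → ℝ)) = volume := by
    simpa using hausdorffMeasure_pi_real (ι := Fin k)
  rw [(isometry_insertNth j s).hausdorffMeasure_image (Or.inl k.cast_nonneg), hausdorff_eq_volume]
  exact measure_closedBall_lt_top

variable {F : Type*} [NormedAddCommGroup F] [NormedSpace ℝ F]

theorem sphere_subset_image_normalize_comp (e : E ≃L[ℝ] F) :
    sphere (0 : F) 1 ⊆ (NormedSpace.normalize ∘ e) '' sphere (0 : E) 1 := by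
  intro y hy
  have norm_y : ‖y‖ = 1 := mem_sphere_zero_iff_norm.1 hy
  have symm_y_ne_zero : e.symm y ≠ 0 :=
    e.symm.map_ne_zero_iff.2 (norm_ne_zero_iff.1 (norm_y ▸ one_ne_zero))
  refine ⟨NormedSpace.normalize (e.symm y), by simpa using symm_y_ne_zero, ?_⟩
  calc NormedSpace.normalize (e (‖e.symm y‖⁻¹ • e.symm y))
      = NormedSpace.normalize (‖e.symm y‖⁻¹ • y) := by rw [map_smul, e.apply_symm_apply]
    _ = y := by
      rw [NormedSpace.normalize_smul_of_pos (by positivity),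
        NormedSpace.normalize_eq_self_of_norm_eq_one norm_y]

theorem exists_lipschitzOnWith_normalize_comp (e : E ≃L[ℝ] F) :
    ∃ K, LipschitzOnWith K (NormedSpace.normalize ∘ e) (sphere (0 : E) 1) := by
  let c : ℝ≥0 := (‖(e.symm : F →L[ℝ] E)‖₊ + 1)⁻¹
  have c_le_norm : MapsTo e (sphere (0 : E) 1) {y | c ≤ ‖y‖} := by
    intro x hx
    have one_le : 1 ≤ ‖(e.symm : F →L[ℝ] E)‖ * ‖e x‖ := by
      simpa [mem_sphere_zero_iff_norm.1 hx] using (e.symm : F →L[ℝ] E).le_opNorm (e x)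
    simp only [c, mem_ofPred_eq, NNReal.coe_inv, NNReal.coe_add, coe_nnnorm, NNReal.coe_one]
    rw [inv_le_iff_one_le_mul₀' (by positivity)]
    linarith [norm_nonneg (e x)]
  exact ⟨_, (lipschitzOnWith_normalize (by positivity : c ≠ 0)).comp
    e.lipschitz.lipschitzOnWith c_le_norm⟩

theorem hausdorffMeasure_sphere_lt_top [FiniteDimensional ℝ E] [Nontrivial E] [MeasurableSpace E]
    [BorelSpace E] : μH[(finrank ℝ E : ℝ) - 1] (sphere (0 : E) 1) < ∞ := by
  obtain ⟨k, hk⟩ := Nat.exists_eq_add_one_of_ne_zero (finrank_pos (R := ℝ) (M := E)).ne'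
  let e : (Fin (k + 1) → ℝ) ≃L[ℝ] E := ContinuousLinearEquiv.ofFinrankEq (by simp [hk])
  obtain ⟨K, hK⟩ := exists_lipschitzOnWith_normalize_comp e
  have finrank_sub_one : (finrank ℝ E : ℝ) - 1 = k := by simp [hk]
  rw [finrank_sub_one]
  calc μH[k] (sphere (0 : E) 1)
      ≤ μH[k] ((NormedSpace.normalize ∘ e) '' sphere 0 1) :=
        measure_mono (sphere_subset_image_normalize_comp e)
    _ ≤ (K : ℝ≥0∞) ^ (k : ℝ) * μH[k] (sphere 0 1) := hK.hausdorffMeasure_image_le k.cast_nonneg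
    _ < ∞ := ENNReal.mul_lt_top
        (ENNReal.rpow_lt_top_of_nonneg k.cast_nonneg ENNReal.coe_ne_top)
        (hausdorffMeasure_sphere_pi_lt_top k)

theorem memLp_restrict_sphere_hausdorffMeasure [FiniteDimensional ℝ E] [Nontrivial E]
    [MeasurableSpace E] [BorelSpace E] {G : Type*} [NormedAddCommGroup G] {f : E → G}
    (hf : Continuous f) (q : ℝ≥0∞) :
    MemLp f q (μH[(finrank ℝ E : ℝ) - 1].restrict (sphere 0 1)) := by
  have : IsFiniteMeasure (μH[(finrank ℝ E : ℝ) - 1].restrict (sphere (0 : E) 1)) :=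
    isFiniteMeasure_restrict.2 hausdorffMeasure_sphere_lt_top.ne
  obtain ⟨M, hM⟩ := (isCompact_sphere (0 : E) 1).exists_bound_of_continuousOn hf.continuousOn
  exact .of_bound hf.aestronglyMeasurable M
    (ae_restrict_of_forall_mem isClosed_sphere.measurableSet hM)

end HausdorffMeasureSphere

section ToSphere

variable {E : Type*} [NormedAddCommGroup E] [NormedSpace ℝ E]

theorem Ioo_smul_subset_iUnion_closedBall {w : E} (hw : ‖w‖ ≤ 1) {d : ℝ} (hd : 0 < d) {s : Set E}
    (hs : s ⊆ closedBall w d) :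
    Ioo (0 : ℝ) 1 • s ⊆
      ⋃ i ∈ Finset.range (⌊1 / d⌋₊ + 1), closedBall (((i : ℝ) * d) • w) (2 * d) := by
  rintro _ ⟨t, ⟨t_pos, t_lt_one⟩, x, hx, rfl⟩
  have floor_mul_le : (⌊t / d⌋₊ : ℝ) * d ≤ t :=
    (le_div_iff₀ hd).1 (Nat.floor_le (div_nonneg t_pos.le hd.le))
  have lt_floor_mul : t < (⌊t / d⌋₊ + 1 : ℝ) * d :=
    (div_lt_iff₀ hd).1 (Nat.lt_floor_add_one _)
  have norm_sub_le : ‖x - w‖ ≤ d := mem_closedBall_iff_norm.1 (hs hx)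
  refine mem_iUnion₂.2 ⟨⌊t / d⌋₊, ?_, mem_closedBall_iff_norm.2 ?_⟩
  · rw [Finset.mem_range, Nat.lt_succ_iff]
    exact Nat.floor_le_floor (by gcongr)
  calc ‖t • x - (⌊t / d⌋₊ * d) • w‖
      = ‖t • (x - w) + (t - ⌊t / d⌋₊ * d) • w‖ := by congr 1; module
    _ ≤ t * ‖x - w‖ + (t - ⌊t / d⌋₊ * d) * ‖w‖ := by
        refine (norm_add_le _ _).trans_eq ?_
        rw [norm_smul_of_nonneg t_pos.le, norm_smul_of_nonneg (sub_nonneg.2 floor_mul_le)]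
    _ ≤ 1 * d + d * 1 := by
        gcongr
        linarith
    _ = 2 * d := by ring

variable [FiniteDimensional ℝ E] [Nontrivial E] [MeasurableSpace E] [BorelSpace E]
  (μ : Measure E) [μ.IsAddHaarMeasure]

theorem measure_Ioo_smul_le {w : E} (hw : ‖w‖ ≤ 1) {d : ℝ} (hd : 0 < d) (hd' : d ≤ 1) {s : Set E}
    (hs : s ⊆ closedBall w d) :
    μ (Ioo (0 : ℝ) 1 • s) ≤
      2 ^ (finrank ℝ E + 1) * μ (ball 0 1) * ENNReal.ofReal d ^ (finrank ℝ E - 1) := by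
  obtain ⟨k, hk⟩ := Nat.exists_eq_add_one_of_ne_zero (finrank_pos (R := ℝ) (M := E)).ne'
  rw [hk, Nat.add_sub_cancel]
  have card_mul_le : ((⌊1 / d⌋₊ + 1 : ℕ) : ℝ) * (2 * d) ^ (k + 1) ≤ 2 ^ (k + 1 + 1) * d ^ k := by
    have floor_mul_le : (⌊1 / d⌋₊ : ℝ) * d ≤ 1 := (le_div_iff₀ hd).1 (Nat.floor_le (by positivity))
    calc ((⌊1 / d⌋₊ + 1 : ℕ) : ℝ) * (2 * d) ^ (k + 1)
        = (⌊1 / d⌋₊ * d + d) * (2 ^ (k + 1) * d ^ k) := by push_cast; ring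
      _ ≤ (1 + 1) * (2 ^ (k + 1) * d ^ k) := by gcongr
      _ = 2 ^ (k + 1 + 1) * d ^ k := by ring
  calc μ (Ioo (0 : ℝ) 1 • s)
      ≤ ∑ i ∈ Finset.range (⌊1 / d⌋₊ + 1), μ (closedBall (((i : ℝ) * d) • w) (2 * d)) :=
        (measure_mono (Ioo_smul_subset_iUnion_closedBall hw hd hs)).trans
          (measure_biUnion_finset_le _ _)
    _ = ENNReal.ofReal (((⌊1 / d⌋₊ + 1 : ℕ) : ℝ) * (2 * d) ^ (k + 1)) * μ (ball 0 1) := by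
        simp only [μ.addHaar_closedBall _ (by positivity : 0 ≤ 2 * d), hk, Finset.sum_const,
          Finset.card_range, nsmul_eq_mul]
        rw [ENNReal.ofReal_mul (by positivity), ENNReal.ofReal_natCast, mul_assoc]
    _ ≤ ENNReal.ofReal (2 ^ (k + 1 + 1) * d ^ k) * μ (ball 0 1) := by gcongr
    _ = 2 ^ (k + 1 + 1) * μ (ball 0 1) * ENNReal.ofReal d ^ k := by
        rw [ENNReal.ofReal_mul (by positivity), ENNReal.ofReal_pow hd.le,
          ENNReal.ofReal_pow zero_le_two, ENNReal.ofReal_ofNat]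
        ring

theorem toSphere_le_of_ediam_le {d : ℝ≥0∞} (hd : d ≠ 0) (hd' : d ≤ 1) {s : Set (sphere (0 : E) 1)}
    (hs : ediam s ≤ d) :
    μ.toSphere s ≤
      finrank ℝ E * (2 ^ (finrank ℝ E + 1) * μ (ball 0 1)) * d ^ (finrank ℝ E - 1) := by
  rcases s.eq_empty_or_nonempty with rfl | ⟨w, hw⟩
  · simp
  have d_ne_top : d ≠ ∞ := ne_top_of_le_ne_top ENNReal.one_ne_top hd'
  have subset_closedBall : s ⊆ closedBall w d.toReal := fun x hx =>
    (edist_le_ofReal ENNReal.toReal_nonneg).1 <| by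
      simpa [ENNReal.ofReal_toReal d_ne_top] using (edist_le_ediam_of_mem hx hw).trans hs
  calc μ.toSphere s
      ≤ μ.toSphere (closedBall w d.toReal) := measure_mono subset_closedBall
    _ = finrank ℝ E * μ (Ioo (0 : ℝ) 1 • ((↑) '' closedBall w d.toReal)) :=
        μ.toSphere_apply' isClosed_closedBall.measurableSet
    _ ≤ finrank ℝ E * (2 ^ (finrank ℝ E + 1) * μ (ball 0 1) *
          ENNReal.ofReal d.toReal ^ (finrank ℝ E - 1)) := by
        gcongr
        refine measure_Ioo_smul_le μ (norm_eq_of_mem_sphere w).le (ENNReal.toReal_pos hd d_ne_top)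
          (ENNReal.toReal_mono ENNReal.one_ne_top hd') ?_
        rintro _ ⟨x, hx, rfl⟩
        exact hx
    _ = _ := by rw [ENNReal.ofReal_toReal d_ne_top, ← mul_assoc]

theorem exists_toSphere_le_smul_hausdorffMeasure :
    ∃ C : ℝ≥0∞, C ≠ ∞ ∧ μ.toSphere ≤ C • μH[(finrank ℝ E : ℝ) - 1] := by
  let C : ℝ≥0∞ := finrank ℝ E * (2 ^ (finrank ℝ E + 1) * μ (ball 0 1))
  have dim_pos : 0 < finrank ℝ E := finrank_pos
  have C_ne_zero : C ≠ 0 := by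
    simp [C, dim_pos.ne', (measure_ball_pos μ (0 : E) one_pos).ne']
  have C_ne_top : C ≠ ∞ := by finiteness
  have toSphere_le : ∀ s : Set (sphere (0 : E) 1), ediam s < 1 →
      μ.toSphere s ≤ C * ediam s ^ (finrank ℝ E - 1) := by
    intro s hs
    have continuous_bound : Continuous fun d : ℝ≥0∞ => C * d ^ (finrank ℝ E - 1) :=
      (ENNReal.continuous_const_mul C_ne_top).comp (ENNReal.continuous_pow _)
    have : (𝓝[>] ediam s).NeBot := nhdsGT_neBot_of_exists_gt ⟨1, hs⟩
    refine ge_of_tendsto (continuous_bound.continuousWithinAt (s := Ioi (ediam s))) ?_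
    filter_upwards [Ioo_mem_nhdsGT hs] with d hd
    exact toSphere_le_of_ediam_le μ (bot_le.trans_lt hd.1).ne' hd.2.le hd.1.le
  have inv_smul_le : C⁻¹ • μ.toSphere ≤ μH[(finrank ℝ E : ℝ) - 1] := by
    refine Measure.le_hausdorffMeasure _ _ (1 / 2) (by simp) fun s hs => ?_
    have exponent : (finrank ℝ E : ℝ) - 1 = (finrank ℝ E - 1 : ℕ) := by
      rw [Nat.cast_sub dim_pos, Nat.cast_one]
    rw [exponent, ENNReal.rpow_natCast, Measure.smul_apply, smul_eq_mul,
      ENNReal.inv_mul_le_iff C_ne_zero C_ne_top]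
    exact toSphere_le s (hs.trans_lt (by simp))
  refine ⟨C, C_ne_top, fun s => ?_⟩
  rw [Measure.smul_apply, smul_eq_mul, ← ENNReal.inv_mul_le_iff C_ne_zero C_ne_top]
  exact inv_smul_le s

theorem exists_lintegral_toSphere_le :
    ∃ C : ℝ≥0∞, C ≠ ∞ ∧ ∀ f : E → ℝ≥0∞,
      ∫⁻ w, f w ∂μ.toSphere ≤ C * ∫⁻ x in sphere 0 1, f x ∂μH[(finrank ℝ E : ℝ) - 1] := by
  obtain ⟨C, C_ne_top, toSphere_le⟩ := exists_toSphere_le_smul_hausdorffMeasure μ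
  refine ⟨C, C_ne_top, fun f => ?_⟩
  have exponent_nonneg : (0 : ℝ) ≤ finrank ℝ E - 1 :=
    sub_nonneg.2 (Nat.one_le_cast.2 finrank_pos)
  have map_coe := (isometry_subtype_coe (s := sphere (0 : E) 1)).map_hausdorffMeasure
    (Or.inl exponent_nonneg)
  rw [Subtype.range_coe] at map_coe
  calc ∫⁻ w, f w ∂μ.toSphere ≤ ∫⁻ w : sphere (0 : E) 1, f w ∂(C • μH[(finrank ℝ E : ℝ) - 1]) :=
        lintegral_mono' toSphere_le le_rfl
    _ = C * ∫⁻ w : sphere (0 : E) 1, f w ∂μH[(finrank ℝ E : ℝ) - 1] := by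
        rw [lintegral_smul_measure, smul_eq_mul]
    _ = C * ∫⁻ x in sphere 0 1, f x ∂μH[(finrank ℝ E : ℝ) - 1] := by
        rw [← map_coe, (MeasurableEmbedding.subtype_coe
          isClosed_sphere.measurableSet).lintegral_map]

end ToSphere

section PolarCoordinates

theorem volumeIoiPow_preimage_Icc_le (k : ℕ) (a b : ℝ) :
    Measure.volumeIoiPow k (Subtype.val ⁻¹' Icc a b) ≤
      ENNReal.ofReal (b ^ k) * ENNReal.ofReal (b - a) := by
  have measurableSet_preimage : MeasurableSet ((↑) ⁻¹' Icc a b : Set (Ioi (0 : ℝ))) :=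
    measurable_subtype_coe measurableSet_Icc
  calc Measure.volumeIoiPow k (Subtype.val ⁻¹' Icc a b)
      = ∫⁻ r : Ioi (0 : ℝ) in (↑) ⁻¹' Icc a b, ENNReal.ofReal ((r : ℝ) ^ k)
          ∂volume.comap Subtype.val := by
        rw [Measure.volumeIoiPow, withDensity_apply _ measurableSet_preimage]
    _ ≤ ∫⁻ _ : Ioi (0 : ℝ) in (↑) ⁻¹' Icc a b, ENNReal.ofReal (b ^ k)
          ∂volume.comap Subtype.val :=
        setLIntegral_mono measurable_const fun r hr =>
          ENNReal.ofReal_le_ofReal (pow_le_pow_left₀ (mem_Ioi.1 r.2).le hr.2 k)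
    _ = ENNReal.ofReal (b ^ k) * volume (Ioi 0 ∩ Icc a b) := by
        rw [setLIntegral_const, comap_subtype_coe_apply measurableSet_Ioi,
          Subtype.image_preimage_coe]
    _ ≤ ENNReal.ofReal (b ^ k) * ENNReal.ofReal (b - a) := by
        rw [← Real.volume_Icc]
        gcongr
        exact inter_subset_right

variable {E : Type*} [NormedAddCommGroup E] [NormedSpace ℝ E] [FiniteDimensional ℝ E]
  [Nontrivial E] [MeasurableSpace E] [BorelSpace E] (μ : Measure E) [μ.IsAddHaarMeasure]
  {f : E → ℝ≥0∞}

theorem lintegral_eq_lintegral_volumeIoiPow_toSphere (hf : Measurable f) :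
    ∫⁻ x, f x ∂μ = ∫⁻ r : Ioi (0 : ℝ), ∫⁻ w : sphere (0 : E) 1, f ((r : ℝ) • (w : E)) ∂μ.toSphere
      ∂Measure.volumeIoiPow (finrank ℝ E - 1) := by
  have measurable_polar :
      Measurable fun q : sphere (0 : E) 1 × Ioi (0 : ℝ) => f ((q.2 : ℝ) • (q.1 : E)) :=
    hf.comp (by fun_prop)
  rw [← lintegral_prod_symm _ measurable_polar.aemeasurable,
    ← μ.measurePreserving_homeomorphUnitSphereProd.lintegral_comp measurable_polar]
  calc ∫⁻ x, f x ∂μ = ∫⁻ x : ({0}ᶜ : Set E), f x ∂μ.comap Subtype.val := by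
        rw [lintegral_subtype_comap (measurableSet_singleton _).compl, restrict_compl_singleton]
    _ = _ := by
        refine lintegral_congr fun x => congrArg f ?_
        have : ‖(x : E)‖ ≠ 0 := norm_ne_zero_iff.2 x.2
        simp [smul_smul, this]

theorem setLIntegral_shell_le (hf : Measurable f) {a b : ℝ} {Q : ℝ≥0∞}
    (hQ : ∀ r ∈ Icc a b, 0 < r → ∫⁻ w : sphere (0 : E) 1, f (r • (w : E)) ∂μ.toSphere ≤ Q) :
    ∫⁻ x in {x | a ≤ ‖x‖ ∧ ‖x‖ ≤ b}, f x ∂μ ≤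
      Q * (ENNReal.ofReal (b ^ (finrank ℝ E - 1)) * ENNReal.ofReal (b - a)) := by
  have measurableSet_shell : MeasurableSet {x : E | a ≤ ‖x‖ ∧ ‖x‖ ≤ b} :=
    measurable_norm measurableSet_Icc
  have norm_polar (r : Ioi (0 : ℝ)) (w : sphere (0 : E) 1) : ‖(r : ℝ) • (w : E)‖ = r := by
    simp [norm_smul, abs_of_pos (mem_Ioi.1 r.2)]
  calc ∫⁻ x in {x | a ≤ ‖x‖ ∧ ‖x‖ ≤ b}, f x ∂μ
      = ∫⁻ r : Ioi (0 : ℝ) in Subtype.val ⁻¹' Icc a b,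
          ∫⁻ w : sphere (0 : E) 1, f ((r : ℝ) • (w : E)) ∂μ.toSphere
            ∂Measure.volumeIoiPow (finrank ℝ E - 1) := by
        rw [← lintegral_indicator measurableSet_shell,
          lintegral_eq_lintegral_volumeIoiPow_toSphere μ (hf.indicator measurableSet_shell),
          ← lintegral_indicator (measurable_subtype_coe measurableSet_Icc)]
        refine lintegral_congr fun r => ?_
        by_cases hr : a ≤ (r : ℝ) ∧ (r : ℝ) ≤ b <;> simp [indicator, norm_polar, hr]
    _ ≤ ∫⁻ _ : Ioi (0 : ℝ) in Subtype.val ⁻¹' Icc a b, Q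
          ∂Measure.volumeIoiPow (finrank ℝ E - 1) :=
        setLIntegral_mono measurable_const fun r hr => hQ r hr r.2
    _ ≤ Q * (ENNReal.ofReal (b ^ (finrank ℝ E - 1)) * ENNReal.ofReal (b - a)) := by
        rw [setLIntegral_const]
        gcongr
        exact volumeIoiPow_preimage_Icc_le _ a b

end PolarCoordinates

section DominatedApproximation

theorem tendsto_eLpNorm_of_dominated {X G : Type*} [MeasurableSpace X] {μ : Measure X}
    [NormedAddCommGroup G] {p : ℝ≥0∞} (hp₀ : p ≠ 0) (hp : p ≠ ∞) {f : ℕ → X → G} {g : X → G}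
    {bound : X → ℝ} (hf : ∀ i, AEStronglyMeasurable (f i) μ) (h_bound : MemLp bound p μ)
    (h_le : ∀ i, ∀ᵐ x ∂μ, ‖f i x‖ ≤ bound x)
    (h_lim : ∀ᵐ x ∂μ, Tendsto (fun i => f i x) atTop (𝓝 (g x))) :
    Tendsto (fun i => eLpNorm (f i) p μ) atTop (𝓝 (eLpNorm g p μ)) := by
  simp only [eLpNorm_eq_lintegral_rpow_enorm_toReal hp₀ hp]
  refine (ENNReal.continuous_rpow_const.tendsto _).comp ?_
  refine tendsto_lintegral_of_dominated_convergence' (fun x => ‖bound x‖ₑ ^ p.toReal)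
    (fun i => (hf i).enorm.pow_const _) (fun i => ?_)
    (lintegral_rpow_enorm_lt_top_of_eLpNorm_lt_top hp₀ hp h_bound.2).ne ?_
  · filter_upwards [h_le i] with x hx
    gcongr
    exact enorm_le_iff_norm_le.2 (hx.trans (le_abs_self _))
  · filter_upwards [h_lim] with x hx
    exact (ENNReal.continuous_rpow_const.tendsto _).comp hx.enorm

variable {E G : Type*} [NormedAddCommGroup E] [NormedAddCommGroup G]

theorem exists_seq_contDiffBump_rOut_tendsto_zero :
    ∃ φ : ℕ → ContDiffBump (0 : E), Tendsto (fun i => (φ i).rOut) atTop (𝓝 0) ∧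
      ∀ i, (φ i).rOut ≤ 1 ∧ (φ i).rOut ≤ 2 * (φ i).rIn := by
  refine ⟨fun i => ⟨1 / (i + 1) / 2, 1 / (i + 1), by positivity, half_lt_self (by positivity)⟩,
    tendsto_one_div_add_atTop_nhds_zero_nat, fun i => ⟨?_, (mul_div_cancel₀ _ two_ne_zero).ge⟩⟩
  exact div_le_one_of_le₀ (by simp) (by positivity)

variable [MeasurableSpace E] [BorelSpace E] {μ : Measure E} {g : E → G}

theorem exists_seq_hasCompactSupport_tendsto [ProperSpace E] (hg : AEStronglyMeasurable g μ) :
    ∃ f : ℕ → E → G, (∀ i, AEStronglyMeasurable (f i) μ) ∧ (∀ i, HasCompactSupport (f i)) ∧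
      (∀ i y, ‖f i y‖ ≤ i) ∧ (∀ i y, ‖f i y‖ ≤ ‖g y‖) ∧
      ∀ y, Tendsto (fun i => f i y) atTop (𝓝 (g y)) := by
  let s : ℕ → Set E := fun i => {y | ‖g y‖ ≤ i} ∩ closedBall 0 i
  have nullMeasurableSet_s (i : ℕ) : NullMeasurableSet (s i) μ :=
    (nullMeasurableSet_le hg.norm.aemeasurable aemeasurable_const).inter
      isClosed_closedBall.measurableSet.nullMeasurableSet
  refine ⟨fun i => (s i).indicator g, fun i => hg.indicator₀ (nullMeasurableSet_s i), fun i => ?_,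
    fun i y => ?_, fun i y => norm_indicator_le_norm_self g y, fun y => ?_⟩
  · exact HasCompactSupport.intro (isCompact_closedBall 0 (i : ℝ)) fun y hy =>
      indicator_of_notMem (fun hys => hy hys.2) g
  · by_cases hy : y ∈ s i
    · exact (congrArg norm (indicator_of_mem hy g)).trans_le hy.1
    · simp [indicator_of_notMem hy]
  · refine tendsto_const_nhds.congr' ?_
    filter_upwards [eventually_ge_atTop ⌈max ‖g y‖ ‖y‖⌉₊] with i hi
    have max_le : max ‖g y‖ ‖y‖ ≤ i := Nat.ceil_le.1 hi
    have mem_s : y ∈ s i := ⟨(le_max_left _ _).trans max_le,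
      mem_closedBall_zero_iff.2 ((le_max_right _ _).trans max_le)⟩
    exact (indicator_of_mem mem_s g).symm

variable [NormedSpace ℝ E] [FiniteDimensional ℝ E] [μ.IsAddHaarMeasure] [NormedSpace ℝ G]

theorem norm_convolution_normed_le (φ : ContDiffBump (0 : E)) {M : ℝ} (hM : ∀ y, ‖g y‖ ≤ M)
    (y : E) : ‖(φ.normed μ ⋆[ContinuousLinearMap.lsmul ℝ ℝ, μ] g) y‖ ≤ M := by
  calc ‖(φ.normed μ ⋆[ContinuousLinearMap.lsmul ℝ ℝ, μ] g) y‖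
      ≤ ∫ t, φ.normed μ t * M ∂μ := by
        refine norm_integral_le_of_norm_le (φ.integrable_normed.mul_const M)
          (.of_forall fun t => ?_)
        rw [ContinuousLinearMap.lsmul_apply, norm_smul_of_nonneg (φ.nonneg_normed t)]
        exact mul_le_mul_of_nonneg_left (hM _) (φ.nonneg_normed t)
    _ = M := by rw [integral_mul_const, φ.integral_normed, one_mul]

theorem support_convolution_normed_subset (φ : ContDiffBump (0 : E)) {R : ℝ}
    (hR : Function.support g ⊆ closedBall 0 R) :
    Function.support (φ.normed μ ⋆[ContinuousLinearMap.lsmul ℝ ℝ, μ] g) ⊆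
      closedBall 0 (φ.rOut + R) := by
  refine (support_convolution_subset _).trans ?_
  rw [φ.support_normed_eq]
  rintro _ ⟨x, hx, y, hy, rfl⟩
  exact mem_closedBall_zero_iff.2 <| norm_add_le_of_le (mem_ball_zero_iff.1 hx).le
    (mem_closedBall_zero_iff.1 (hR hy))

theorem exists_seq_schwartzMap_tendsto_ae [CompleteSpace G] (hg : AEStronglyMeasurable g μ)
    {M : ℝ} (hM : ∀ y, ‖g y‖ ≤ M) (hgc : HasCompactSupport g) :
    ∃ (h : ℕ → SchwartzMap E G) (R : ℝ),
      (∀ i y, ‖h i y‖ ≤ (closedBall 0 R).indicator (fun _ => M) y) ∧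
      ∀ᵐ y ∂μ, Tendsto (fun i => h i y) atTop (𝓝 (g y)) := by
  obtain ⟨φ, rOut_tendsto, hφ⟩ := exists_seq_contDiffBump_rOut_tendsto_zero (E := E)
  obtain ⟨R, tsupport_subset⟩ := hgc.isCompact.isBounded.subset_closedBall (0 : E)
  have locallyIntegrable_g : LocallyIntegrable g μ :=
    (memLp_one_iff_integrable.1 (hgc.memLp_of_bound hg M (.of_forall hM))).locallyIntegrable
  have hasCompactSupport_normed (i : ℕ) : HasCompactSupport ((φ i).normed μ) :=
    (φ i).hasCompactSupport_normed
  let h (i : ℕ) : SchwartzMap E G :=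
    ((hasCompactSupport_normed i).convolution (ContinuousLinearMap.lsmul ℝ ℝ) hgc).toSchwartzMap
      ((hasCompactSupport_normed i).contDiff_convolution_left _ (φ i).contDiff_normed
        locallyIntegrable_g)
  refine ⟨h, 1 + R, fun i y => ?_, ?_⟩
  · by_cases hy : y ∈ Function.support (h i)
    · have support_subset := support_convolution_normed_subset (μ := μ) (φ i)
        ((subset_tsupport g).trans tsupport_subset)
      rw [indicator_of_mem (closedBall_subset_closedBall (by gcongr; exact (hφ i).1)
        (support_subset hy))]
      exact norm_convolution_normed_le (φ i) hM y
    · rw [Function.notMem_support.1 hy, norm_zero]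
      exact indicator_nonneg (fun _ _ => (norm_nonneg _).trans (hM 0)) y
  · exact ContDiffBump.ae_convolution_tendsto_right_of_locallyIntegrable rOut_tendsto
      (.of_forall fun i => (hφ i).2) locallyIntegrable_g

end DominatedApproximation

section LinearChangeOfVariables

variable {E : Type*} [NormedAddCommGroup E] [NormedSpace ℝ E] [FiniteDimensional ℝ E]
  [MeasurableSpace E] [BorelSpace E] (μ : Measure E) [μ.IsAddHaarMeasure] {L : E →ₗ[ℝ] E}
  {G : Type*} [NormedAddCommGroup G]

theorem measurableEmbedding_of_det_ne_zero (hL : L.det ≠ 0) : MeasurableEmbedding L :=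
  (L.isClosedEmbedding_of_injective (L.equivOfDetNeZero hL).ker).measurableEmbedding

theorem integral_comp_linearMap [NormedSpace ℝ G] (hL : L.det ≠ 0) (f : E → G) :
    ∫ x, f (L x) ∂μ = |L.det|⁻¹ • ∫ x, f x ∂μ := by
  rw [← (measurableEmbedding_of_det_ne_zero hL).integral_map,
    Measure.map_linearMap_addHaar_eq_smul_addHaar μ hL, integral_smul_measure,
    ENNReal.toReal_ofReal (abs_nonneg _), abs_inv]

theorem eLpNorm_comp_linearMap (hL : L.det ≠ 0) {p : ℝ≥0∞} (hp : p ≠ ∞) (g : E → G) :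
    eLpNorm (g ∘ L) p μ = ENNReal.ofReal (|L.det|⁻¹ ^ p.toReal⁻¹) * eLpNorm g p μ := by
  rw [← (measurableEmbedding_of_det_ne_zero hL).eLpNorm_map_measure,
    Measure.map_linearMap_addHaar_eq_smul_addHaar μ hL, eLpNorm_smul_measure_of_ne_top hp,
    smul_eq_mul, abs_inv, ENNReal.ofReal_rpow_of_pos (by positivity), one_div, ENNReal.toReal_inv]

variable {μ}

theorem memLp_comp_linearMap (hL : L.det ≠ 0) {p : ℝ≥0∞} {g : E → G} (hg : MemLp g p μ) :
    MemLp (g ∘ L) p μ := by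
  refine (measurableEmbedding_of_det_ne_zero hL).memLp_map_measure_iff.1 ?_
  rw [Measure.map_linearMap_addHaar_eq_smul_addHaar μ hL]
  exact hg.smul_measure ENNReal.ofReal_ne_top

end LinearChangeOfVariables

section L2

variable {X G : Type*} [MeasurableSpace X] {ν : Measure X} [NormedAddCommGroup G] {f : X → G}

theorem eLpNorm_two_sq_eq_lintegral (f : X → G) :
    eLpNorm f 2 ν ^ 2 = ∫⁻ x, ‖f x‖ₑ ^ 2 ∂ν := by
  simpa using eLpNorm_nnreal_pow_eq_lintegral (f := f) (μ := ν) (two_ne_zero (α := ℝ≥0))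

theorem integral_norm_sq_eq_toReal_eLpNorm_sq (hf : AEStronglyMeasurable f ν) :
    ∫ x, ‖f x‖ ^ 2 ∂ν = (eLpNorm f 2 ν).toReal ^ 2 := by
  have hf_sq : AEStronglyMeasurable (fun x => ‖f x‖ ^ 2) ν := hf.norm.pow 2
  rw [integral_eq_lintegral_of_nonneg_ae (.of_forall fun x => by positivity) hf_sq,
    ← ENNReal.toReal_pow, eLpNorm_two_sq_eq_lintegral]
  simp only [ENNReal.ofReal_pow (norm_nonneg _), ofReal_norm]

theorem eLpNorm_two_le_of_integral_norm_sq_le {A : ℝ} {b : ℝ≥0∞} (hf : MemLp f 2 ν) (hb : b ≠ ∞)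
    (hA : ∫ x, ‖f x‖ ^ 2 ∂ν ≤ A ^ 2 * b.toReal ^ 2) :
    eLpNorm f 2 ν ≤ ENNReal.ofReal |A| * b := by
  rw [integral_norm_sq_eq_toReal_eLpNorm_sq hf.aestronglyMeasurable, ← sq_abs A, ← mul_pow] at hA
  rw [← ENNReal.ofReal_toReal hf.eLpNorm_ne_top, ← ENNReal.ofReal_toReal hb,
    ← ENNReal.ofReal_mul (abs_nonneg A)]
  exact ENNReal.ofReal_le_ofReal (le_of_sq_le_sq hA (by positivity))

end L2

section Shell

variable {E G : Type*} [NormedAddCommGroup E] [NormedSpace ℝ E] [FiniteDimensional ℝ E]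
  [Nontrivial E] [MeasurableSpace E] [BorelSpace E] [NormedAddCommGroup G]

theorem exists_eLpNorm_shell_sq_le (μ : Measure E) [μ.IsAddHaarMeasure] :
    ∃ B : ℝ, 0 ≤ B ∧ ∀ (f : E → G) (Q : ℝ≥0∞) (ε : ℝ), StronglyMeasurable f → 0 ≤ ε → ε ≤ 1 →
      (∀ r ∈ Icc (1 - ε) (1 + ε), 0 < r →
        eLpNorm (fun x => f (r • x)) 2 (μH[(finrank ℝ E : ℝ) - 1].restrict (sphere 0 1)) ≤ Q) →
      eLpNorm f 2 (μ.restrict {x | 1 - ε ≤ ‖x‖ ∧ ‖x‖ ≤ 1 + ε}) ^ 2 ≤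
        ENNReal.ofReal (B * ε) * Q ^ 2 := by
  obtain ⟨C, C_ne_top, lintegral_toSphere_le⟩ := exists_lintegral_toSphere_le μ
  refine ⟨C.toReal * (2 ^ (finrank ℝ E - 1) * 2), by positivity, fun f Q ε hf hε hε' hQ => ?_⟩
  have toSphere_bound : ∀ r ∈ Icc (1 - ε) (1 + ε), 0 < r →
      ∫⁻ w : sphere (0 : E) 1, ‖f (r • (w : E))‖ₑ ^ 2 ∂μ.toSphere ≤ C * Q ^ 2 := by
    intro r hr r_pos
    refine (lintegral_toSphere_le fun x => ‖f (r • x)‖ₑ ^ 2).trans ?_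
    rw [← eLpNorm_two_sq_eq_lintegral]
    gcongr
    exact hQ r hr r_pos
  calc eLpNorm f 2 (μ.restrict {x | 1 - ε ≤ ‖x‖ ∧ ‖x‖ ≤ 1 + ε}) ^ 2
      ≤ C * Q ^ 2 * (ENNReal.ofReal ((1 + ε) ^ (finrank ℝ E - 1)) *
          ENNReal.ofReal (1 + ε - (1 - ε))) := by
        rw [eLpNorm_two_sq_eq_lintegral]
        exact setLIntegral_shell_le μ (hf.enorm.pow_const 2) toSphere_bound
    _ ≤ C * Q ^ 2 * (ENNReal.ofReal (2 ^ (finrank ℝ E - 1)) * ENNReal.ofReal (2 * ε)) := by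
        gcongr <;> linarith
    _ = ENNReal.ofReal (C.toReal * (2 ^ (finrank ℝ E - 1) * 2) * ε) * Q ^ 2 := by
        rw [mul_assoc C.toReal, mul_assoc _ 2 ε, ENNReal.ofReal_mul ENNReal.toReal_nonneg,
          ENNReal.ofReal_toReal C_ne_top, ENNReal.ofReal_mul (p := 2 ^ _) (by positivity)]
        ring

end Shell

section OscOp

variable {n : ℕ} {α : Fin n → ℕ} {m : ℕ} {g : EuclideanSpace ℝ (Fin n) → ℂ}

theorem norm_oscKernel_mul (x y : EuclideanSpace ℝ (Fin n)) (z : ℂ) :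
    ‖Complex.exp (Complex.I * Complex.ofReal (∑ j, (x j) ^ (α j) * (y j) ^ m)) * z‖ = ‖z‖ := by
  rw [norm_mul, mul_comm Complex.I, Complex.norm_exp_ofReal_mul_I, one_mul]

theorem aestronglyMeasurable_oscKernel_mul (hg : AEStronglyMeasurable g)
    (x : EuclideanSpace ℝ (Fin n)) :
    AEStronglyMeasurable fun y =>
      Complex.exp (Complex.I * Complex.ofReal (∑ j, (x j) ^ (α j) * (y j) ^ m)) * g y :=
  (by fun_prop : Continuous _).aestronglyMeasurable.mul hg

theorem continuous_oscOp (hg : Integrable g) : Continuous (oscOp α m g) :=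
  continuous_of_dominated (aestronglyMeasurable_oscKernel_mul hg.aestronglyMeasurable)
    (fun x => .of_forall fun y => (norm_oscKernel_mul x y _).le) hg.norm
    (.of_forall fun y => by fun_prop)

theorem tendsto_oscOp_of_dominated {h : ℕ → EuclideanSpace ℝ (Fin n) → ℂ}
    {bound : EuclideanSpace ℝ (Fin n) → ℝ} (hh : ∀ i, AEStronglyMeasurable (h i))
    (h_bound : Integrable bound) (h_le : ∀ i, ∀ᵐ y, ‖h i y‖ ≤ bound y)
    (h_lim : ∀ᵐ y, Tendsto (fun i => h i y) atTop (𝓝 (g y))) (x : EuclideanSpace ℝ (Fin n)) :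
    Tendsto (fun i => oscOp α m (h i) x) atTop (𝓝 (oscOp α m g x)) := by
  refine tendsto_integral_of_dominated_convergence bound
    (fun i => aestronglyMeasurable_oscKernel_mul (hh i) x) h_bound (fun i => ?_) ?_
  · filter_upwards [h_le i] with y hy
    exact (norm_oscKernel_mul x y _).trans_le hy
  · filter_upwards [h_lim] with y hy
    exact hy.const_mul _

section Density

variable {p q C : ℝ≥0∞} {ν : Measure (EuclideanSpace ℝ (Fin n))}

theorem eLpNorm_oscOp_le_of_dominated (hp₀ : p ≠ 0) (hp : p ≠ ∞) (hC : C ≠ ∞)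
    {h : ℕ → EuclideanSpace ℝ (Fin n) → ℂ} {bound : EuclideanSpace ℝ (Fin n) → ℝ}
    (hh : ∀ i, AEStronglyMeasurable (h i)) (h_bound₁ : MemLp bound 1) (h_bound : MemLp bound p)
    (h_le : ∀ i, ∀ᵐ y, ‖h i y‖ ≤ bound y)
    (h_lim : ∀ᵐ y, Tendsto (fun i => h i y) atTop (𝓝 (g y)))
    (hT : ∀ i, eLpNorm (oscOp α m (h i)) q ν ≤ C * eLpNorm (h i) p volume) :
    eLpNorm (oscOp α m g) q ν ≤ C * eLpNorm g p volume := by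
  have integrable_bound := memLp_one_iff_integrable.1 h_bound₁
  have continuous_osc (i : ℕ) : Continuous (oscOp α m (h i)) :=
    continuous_oscOp (integrable_bound.mono' (hh i) (h_le i))
  calc eLpNorm (oscOp α m g) q ν
      ≤ atTop.liminf fun i => eLpNorm (oscOp α m (h i)) q ν :=
        Lp.eLpNorm_lim_le_liminf_eLpNorm (fun i => (continuous_osc i).aestronglyMeasurable) _
          (.of_forall (tendsto_oscOp_of_dominated hh integrable_bound h_le h_lim))
    _ ≤ atTop.liminf fun i => C * eLpNorm (h i) p volume :=
        liminf_le_liminf (.of_forall hT)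
    _ = C * eLpNorm g p volume :=
        (ENNReal.Tendsto.const_mul (tendsto_eLpNorm_of_dominated hp₀ hp hh h_bound h_le h_lim)
          (.inr hC)).liminf_eq

theorem eLpNorm_oscOp_le_of_forall_schwartzMap (hp₀ : p ≠ 0) (hp : p ≠ ∞) (hC : C ≠ ∞)
    (hT : ∀ h : SchwartzMap (EuclideanSpace ℝ (Fin n)) ℂ,
      eLpNorm (oscOp α m h) q ν ≤ C * eLpNorm h p volume)
    (hg₁ : MemLp g 1) (hg : MemLp g p) :
    eLpNorm (oscOp α m g) q ν ≤ C * eLpNorm g p volume := by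
  obtain ⟨f, f_meas, f_supp, f_le, f_le_g, f_lim⟩ :=
    exists_seq_hasCompactSupport_tendsto hg.aestronglyMeasurable
  refine eLpNorm_oscOp_le_of_dominated hp₀ hp hC f_meas hg₁.norm hg.norm
    (fun i => .of_forall (f_le_g i)) (.of_forall f_lim) fun i => ?_
  obtain ⟨h, R, h_le, h_lim⟩ := exists_seq_schwartzMap_tendsto_ae (f_meas i) (f_le i) (f_supp i)
  have memLp_bound (s : ℝ≥0∞) :
      MemLp ((closedBall (0 : EuclideanSpace ℝ (Fin n)) R).indicator fun _ => (i : ℝ)) s :=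
    memLp_indicator_const s measurableSet_closedBall _ (.inr measure_closedBall_lt_top.ne)
  exact eLpNorm_oscOp_le_of_dominated hp₀ hp hC (fun k => (h k).continuous.aestronglyMeasurable)
    (memLp_bound 1) (memLp_bound p) (fun k => .of_forall (h_le k)) h_lim fun k => hT (h k)

end Density

section Scaling

/-- The anisotropic dilation `(y₁, …, yₙ) ↦ (d₁ y₁, …, dₙ yₙ)` of `ℝⁿ`, which transports a change
of the variable `x` in `oscOp` to a change of the function it is applied to. -/
noncomputable def diagonalScaling (d : Fin n → ℝ) :
    EuclideanSpace ℝ (Fin n) →ₗ[ℝ] EuclideanSpace ℝ (Fin n) :=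
  Matrix.toLpLin 2 2 (Matrix.diagonal d)

theorem diagonalScaling_apply (d : Fin n → ℝ) (y : EuclideanSpace ℝ (Fin n)) (j : Fin n) :
    diagonalScaling d y j = d j * y j := by
  simp [diagonalScaling, Matrix.toLpLin_apply, Matrix.mulVec_diagonal]

theorem det_diagonalScaling (d : Fin n → ℝ) : (diagonalScaling d).det = ∏ j, d j := by
  rw [diagonalScaling, Matrix.toLpLin_eq_toLin, LinearMap.det_toLin, Matrix.det_diagonal]

theorem oscOp_eq_smul_oscOp_comp_diagonalScaling {d : Fin n → ℝ} (hd : ∀ j, d j ≠ 0)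
    {x x' : EuclideanSpace ℝ (Fin n)} (h : ∀ j, x' j ^ α j * d j ^ m = x j ^ α j) :
    oscOp α m g x' = |∏ j, d j| • oscOp α m (g ∘ diagonalScaling d) x := by
  have det_ne_zero : (diagonalScaling d).det ≠ 0 := by
    rw [det_diagonalScaling]
    exact Finset.prod_ne_zero_iff.2 fun j _ => hd j
  have phase_eq (y : EuclideanSpace ℝ (Fin n)) :
      ∑ j, x j ^ α j * y j ^ m = ∑ j, x' j ^ α j * diagonalScaling d y j ^ m :=
    Finset.sum_congr rfl fun j _ => by rw [diagonalScaling_apply, mul_pow, ← mul_assoc, h]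
  have change_of_variables := integral_comp_linearMap volume det_ne_zero fun y =>
    Complex.exp (Complex.I * Complex.ofReal (∑ j, x' j ^ α j * y j ^ m)) * g y
  simp only [oscOp, Function.comp_apply, phase_eq]
  rw [change_of_variables, det_diagonalScaling, smul_inv_smul₀]
  rwa [abs_ne_zero, ← det_diagonalScaling]

theorem mul_rpow_neg_div_pow {r : ℝ} (hr : 0 < r) (hm : m ≠ 0) (t : ℝ) (a : ℕ) :
    (r * t) ^ a * (r ^ (-(a : ℝ) / m)) ^ m = t ^ a := by
  rw [← Real.rpow_mul_natCast hr.le, div_mul_cancel₀ _ (Nat.cast_ne_zero.2 hm),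
    Real.rpow_neg hr.le, Real.rpow_natCast, mul_pow]
  field_simp

variable {p q C : ℝ≥0∞} {ν : Measure (EuclideanSpace ℝ (Fin n))}

theorem eLpNorm_oscOp_smul_le (hm : m ≠ 0) (hp : p ≠ ∞)
    (hT : ∀ g : EuclideanSpace ℝ (Fin n) → ℂ, MemLp g 1 → MemLp g p →
      eLpNorm (oscOp α m g) q ν ≤ C * eLpNorm g p volume)
    {r : ℝ} (hr : 0 < r) (hg₁ : MemLp g 1) (hg : MemLp g p) :
    eLpNorm (fun x => oscOp α m g (r • x)) q ν ≤
      C * ENNReal.ofReal (r ^ (-(∑ j, α j : ℝ) / m * (1 - p.toReal⁻¹))) *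
        eLpNorm g p volume := by
  let d : Fin n → ℝ := fun j => r ^ (-(α j : ℝ) / m)
  have d_pos (j : Fin n) : 0 < d j := Real.rpow_pos_of_pos hr _
  have prod_pos : 0 < ∏ j, d j := Finset.prod_pos fun j _ => d_pos j
  have prod_eq : ∏ j, d j = r ^ (-(∑ j, α j : ℝ) / m) := by
    rw [← Real.rpow_sum_of_pos hr, neg_div, Finset.sum_div]
    simp only [neg_div, Finset.sum_neg_distrib]
  have det_ne_zero : (diagonalScaling d).det ≠ 0 := det_diagonalScaling d ▸ prod_pos.ne'
  have oscOp_smul : (fun x => oscOp α m g (r • x)) =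
      (∏ j, d j) • oscOp α m (g ∘ diagonalScaling d) := by
    funext x
    rw [Pi.smul_apply, ← abs_of_pos prod_pos]
    exact oscOp_eq_smul_oscOp_comp_diagonalScaling (fun j => (d_pos j).ne')
      fun j => mul_rpow_neg_div_pow hr hm (x j) (α j)
  have factor_eq : (∏ j, d j) * (∏ j, d j)⁻¹ ^ p.toReal⁻¹ =
      r ^ (-(∑ j, α j : ℝ) / m * (1 - p.toReal⁻¹)) := by
    rw [Real.rpow_mul hr.le, ← prod_eq, Real.rpow_sub prod_pos, Real.rpow_one,
      Real.inv_rpow prod_pos.le, div_eq_mul_inv]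
  calc eLpNorm (fun x => oscOp α m g (r • x)) q ν
      = ENNReal.ofReal (∏ j, d j) * eLpNorm (oscOp α m (g ∘ diagonalScaling d)) q ν := by
        rw [oscOp_smul, eLpNorm_const_smul, Real.enorm_of_nonneg prod_pos.le]
    _ ≤ ENNReal.ofReal (∏ j, d j) * (C * eLpNorm (g ∘ diagonalScaling d) p volume) := by
        gcongr
        exact hT _ (memLp_comp_linearMap det_ne_zero hg₁) (memLp_comp_linearMap det_ne_zero hg)
    _ = C * ENNReal.ofReal (r ^ (-(∑ j, α j : ℝ) / m * (1 - p.toReal⁻¹))) *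
          eLpNorm g p volume := by
        rw [eLpNorm_comp_linearMap volume det_ne_zero hp, det_diagonalScaling, abs_of_pos prod_pos,
          ← factor_eq, ENNReal.ofReal_mul prod_pos.le]
        ring

theorem exists_eLpNorm_oscOp_smul_le (hm : m ≠ 0) (hp : p ≠ ∞) (hC : C ≠ ∞)
    (hT : ∀ g : EuclideanSpace ℝ (Fin n) → ℂ, MemLp g 1 → MemLp g p →
      eLpNorm (oscOp α m g) q ν ≤ C * eLpNorm g p volume)
    {a b : ℝ} (ha : 0 < a) :
    ∃ K ≠ ∞, ∀ r ∈ Icc a b, ∀ g : EuclideanSpace ℝ (Fin n) → ℂ, MemLp g 1 → MemLp g p →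
      eLpNorm (fun x => oscOp α m g (r • x)) q ν ≤ K * eLpNorm g p volume := by
  let s : ℝ := -(∑ j, α j : ℝ) / m * (1 - p.toReal⁻¹)
  have continuousOn_rpow : ContinuousOn (fun r : ℝ => r ^ s) (Icc a b) := fun r hr =>
    (Real.continuousAt_rpow_const r s (.inl (ha.trans_le hr.1).ne')).continuousWithinAt
  obtain ⟨M, hM⟩ := isCompact_Icc.exists_bound_of_continuousOn continuousOn_rpow
  refine ⟨C * ENNReal.ofReal M, ENNReal.mul_ne_top hC ENNReal.ofReal_ne_top,
    fun r hr g hg₁ hg => ?_⟩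
  refine (eLpNorm_oscOp_smul_le hm hp hT (ha.trans_le hr.1) hg₁ hg).trans ?_
  gcongr
  exact (le_abs_self _).trans (hM r hr)

end Scaling

end OscOp

section Transfer

variable {n : ℕ} {α : Fin n → ℕ} {m : ℕ} {p : ℝ≥0∞} {A : ℝ}

theorem eLpNorm_oscOp_sphere_le_of_integral_le [NeZero n]
    (h : SchwartzMap (EuclideanSpace ℝ (Fin n)) ℂ)
    (hA : ∫ x in sphere 0 1, ‖oscOp α m h x‖ ^ 2 ∂μH[(n : ℝ) - 1] ≤
      A ^ 2 * (eLpNorm h p volume).toReal ^ 2) :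
    eLpNorm (oscOp α m h) 2 (μH[(n : ℝ) - 1].restrict (sphere 0 1)) ≤
      ENNReal.ofReal |A| * eLpNorm h p volume := by
  have memLp_osc := memLp_restrict_sphere_hausdorffMeasure
    (continuous_oscOp (α := α) (m := m) h.integrable) 2
  rw [finrank_euclideanSpace_fin] at memLp_osc
  exact eLpNorm_two_le_of_integral_norm_sq_le memLp_osc (h.memLp p volume).eLpNorm_ne_top hA

theorem sphere_to_shell_transfer_general [NeZero n] (hm : m ≠ 0) (hp₀ : p ≠ 0) (hp : p ≠ ∞)
    (hA : ∀ h : SchwartzMap (EuclideanSpace ℝ (Fin n)) ℂ,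
      ∫ x in sphere 0 1, ‖oscOp α m h x‖ ^ 2 ∂μH[(n : ℝ) - 1] ≤
        A ^ 2 * (eLpNorm h p volume).toReal ^ 2) :
    ∃ A' : ℝ, ∀ ε : ℝ, 0 ≤ ε → ε ≤ 1 / 2 → ∀ g : EuclideanSpace ℝ (Fin n) → ℂ,
      MemLp g 1 → MemLp g p →
        ∫ x in {x | 1 - ε ≤ ‖x‖ ∧ ‖x‖ ≤ 1 + ε}, ‖oscOp α m g x‖ ^ 2 ≤
          A' * ε * (eLpNorm g p volume).toReal ^ 2 := by
  obtain ⟨K, K_ne_top, sphere_bound⟩ := exists_eLpNorm_oscOp_smul_le (a := 1 / 2) (b := 3 / 2)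
    hm hp ENNReal.ofReal_ne_top (fun g hg₁ hg => eLpNorm_oscOp_le_of_forall_schwartzMap hp₀ hp
      ENNReal.ofReal_ne_top (fun h => eLpNorm_oscOp_sphere_le_of_integral_le h (hA h)) hg₁ hg)
    (by norm_num)
  obtain ⟨B, B_nonneg, shell_bound⟩ :=
    exists_eLpNorm_shell_sq_le (G := ℂ) (volume : Measure (EuclideanSpace ℝ (Fin n)))
  rw [finrank_euclideanSpace_fin] at shell_bound
  refine ⟨B * K.toReal ^ 2, fun ε hε hε' g hg₁ hg => ?_⟩
  have continuous_osc := continuous_oscOp (α := α) (m := m) (memLp_one_iff_integrable.1 hg₁)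
  have shell_le := shell_bound (oscOp α m g) (K * eLpNorm g p volume) ε
    continuous_osc.stronglyMeasurable hε (by linarith)
    fun r hr _ => sphere_bound r ⟨by linarith [hr.1], by linarith [hr.2]⟩ g hg₁ hg
  have rhs_ne_top : ENNReal.ofReal (B * ε) * (K * eLpNorm g p volume) ^ 2 ≠ ∞ :=
    ENNReal.mul_ne_top ENNReal.ofReal_ne_top
      (ENNReal.pow_ne_top (ENNReal.mul_ne_top K_ne_top hg.eLpNorm_ne_top))
  calc ∫ x in {x | 1 - ε ≤ ‖x‖ ∧ ‖x‖ ≤ 1 + ε}, ‖oscOp α m g x‖ ^ 2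
      = (eLpNorm (oscOp α m g) 2
          (volume.restrict {x | 1 - ε ≤ ‖x‖ ∧ ‖x‖ ≤ 1 + ε}) ^ 2).toReal := by
        rw [integral_norm_sq_eq_toReal_eLpNorm_sq continuous_osc.aestronglyMeasurable,
          ENNReal.toReal_pow]
    _ ≤ (ENNReal.ofReal (B * ε) * (K * eLpNorm g p volume) ^ 2).toReal :=
        ENNReal.toReal_mono rhs_ne_top shell_le
    _ = B * K.toReal ^ 2 * ε * (eLpNorm g p volume).toReal ^ 2 := by
        rw [ENNReal.toReal_mul, ENNReal.toReal_ofReal (by positivity), ENNReal.toReal_pow,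
          ENNReal.toReal_mul]
        ring

end Transfer

/-- Transfer of the restriction estimate from the sphere to a thin shell:
if `∫_{𝕊^{n-1}} |T g|² dσ ≤ A² ‖g‖_p²` for all Schwartz `g`, then for all sufficiently
small `δ ∈ (0, 1/2)` and all bounded compactly supported measurable `g`,
`∫_{1-δ² ≤ |x| ≤ 1+δ²} |T g|² dx ≤ A' δ² ‖g‖_p²`. -/
theorem sphere_to_shell_transfer (n : ℕ) (hn : 2 ≤ n) (α : Fin n → ℕ)
    (hα : ∀ j, 3 ≤ α j) (m : ℕ) (hm : 3 ≤ m) (p : ℝ) (hp1 : 1 ≤ p) (A : ℝ)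
    (hA : ∀ g : SchwartzMap (EuclideanSpace ℝ (Fin n)) ℂ,
      ∫ x in Metric.sphere (0 : EuclideanSpace ℝ (Fin n)) 1,
          ‖oscOp α m (⇑g) x‖ ^ 2 ∂(μH[(n : ℝ) - 1])
        ≤ A ^ 2 * (eLpNorm (⇑g) (ENNReal.ofReal p) volume).toReal ^ 2) :
    ∃ A' : ℝ, ∃ δ₀ : ℝ, 0 < δ₀ ∧ ∀ δ : ℝ, 0 < δ → δ < δ₀ → δ < 1 / 2 →
      ∀ g : EuclideanSpace ℝ (Fin n) → ℂ, Measurable g → (∃ M : ℝ, ∀ y, ‖g y‖ ≤ M) →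
        HasCompactSupport g →
        ∫ x in {x : EuclideanSpace ℝ (Fin n) | 1 - δ ^ 2 ≤ ‖x‖ ∧ ‖x‖ ≤ 1 + δ ^ 2},
            ‖oscOp α m g x‖ ^ 2
          ≤ A' * δ ^ 2 * (eLpNorm g (ENNReal.ofReal p) volume).toReal ^ 2 := by
  have : NeZero n := ⟨by omega⟩
  obtain ⟨A', shell_bound⟩ := sphere_to_shell_transfer_general (by omega)
    (ENNReal.ofReal_pos.2 (by linarith)).ne' ENNReal.ofReal_ne_top hA
  refine ⟨A', 1, one_pos, fun δ _ _ hδ g hg ⟨M, hM⟩ hg_supp => ?_⟩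
  have memLp_g (q : ℝ≥0∞) : MemLp g q :=
    hg_supp.memLp_of_bound hg.aestronglyMeasurable M (.of_forall hM)
  exact shell_bound (δ ^ 2) (by positivity) (by nlinarith) g (memLp_g 1) (memLp_g _)
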